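/- Let S_1, …, S_k be bounded linear operators on H each admitting an A-adjoint, and let n ≥ 1 be an integer. Then ω_A( Σ_{i=1}^k S_i )^{4n} ≤ (k^{4n−1}/4) · [ ‖ Σ_{i=1}^k ( (S_i^{♯_A} S_i)^{2n} + (S_i S_i^{♯_A})^{2n} ) ‖_A + 2 Σ_{i=1}^k ω_A( (S_i^{♯_A} S_i)^{n} (S_i S_i^{♯_A})^{n} ) ]. -/

import Mathlib

noncomputable section

open ContinuousLinearMap

variable {H : Type*} [NormedAddCommGroup H] [InnerProductSpace ℂ H] [CompleteSpace H]

/-- The semi-inner product induced by the positive operator `A`: `⟨x, y⟩_A := ⟨A x, y⟩`. -/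
def innA (A : H →L[ℂ] H) (x y : H) : ℂ := inner ℂ (A x) y

/-- The seminorm induced by `A`: `‖x‖_A := ⟨x, x⟩_A ^ (1/2)`. -/
def vnormA (A : H →L[ℂ] H) (x : H) : ℝ := Real.sqrt (innA A x x).re

/-- The `A`-operator seminorm: `‖T‖_A := sup {‖T x‖_A : ‖x‖_A = 1}`. -/
def opNormA (A T : H →L[ℂ] H) : ℝ :=
  sSup {c : ℝ | ∃ x : H, vnormA A x = 1 ∧ c = vnormA A (T x)}

/-- The `A`-numerical radius: `ω_A(T) := sup {|⟨T x, x⟩_A| : ‖x‖_A = 1}`. -/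
def wA (A T : H →L[ℂ] H) : ℝ :=
  sSup {c : ℝ | ∃ x : H, vnormA A x = 1 ∧ c = ‖innA A (T x) x‖}

/-- `T` admits an `A`-adjoint: there is a bounded operator `X` with `A X = T* A`. -/
def HasAAdjoint (A T : H →L[ℂ] H) : Prop :=
  ∃ X : H →L[ℂ] H, A ∘L X = adjoint T ∘L A

/-- `X` is the reduced `A`-adjoint `T^{♯_A}` of `T`: it solves `A X = T* A` and its range
is contained in the closure of the range of `A`. -/
def IsReducedAAdjoint (A T X : H →L[ℂ] H) : Prop :=
  (A ∘L X = adjoint T ∘L A) ∧ ∀ y : H, X y ∈ closure (Set.range A)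

/- Each `ω_A` and `‖·‖_A` on the right is a supremum over `A`-unit vectors, so it suffices to fix
such an `x` and work in the seminormed space with inner product `⟪A x, y⟫`. The power mean
inequality reduces the sum to a single `T` with adjoint `X`. There `P = X T` and `Q = T X` are
positive, `|⟪T x, x⟫| ^ 2` is at most `⟪P x, x⟫` and at most `⟪Q x, x⟫`, and McCarthy's inequality
moves the `n`-th powers inside; the product `⟪P ^ n x, x⟫ ⟪x, Q ^ n x⟫` is then split by Buzano's
inequality and AM-GM.

Bounding by the suprema requires them to be finite, i.e. every operator with an `A`-adjoint to be
bounded for `‖·‖_A`: by McCarthy `‖T x‖_A ^ (2 j)` grows at most like `‖P ^ j x‖_A`, hence like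
`‖P‖ ^ j`. -/

theorem le_of_forall_pow_le_mul_pow {K : Type*} [Field K] [LinearOrder K] [IsStrictOrderedRing K]
    [Archimedean K] {a b C : K} (hb : 0 ≤ b) (h : ∀ j : ℕ, a ^ j ≤ C * b ^ j) : a ≤ b := by
  rcases hb.eq_or_lt with rfl | hb
  · simpa using h 1
  by_contra! hba
  obtain ⟨j, hj⟩ := pow_unbounded_of_one_lt C ((one_lt_div hb).mpr hba)
  rw [div_pow, lt_div_iff₀ (pow_pos hb j)] at hj
  exact (h j).not_gt hj

theorem norm_pow_apply_le {𝕜 F : Type*} [NontriviallyNormedField 𝕜] [SeminormedAddCommGroup F]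
    [NormedSpace 𝕜 F] (T : F →L[𝕜] F) (j : ℕ) (x : F) : ‖(T ^ j) x‖ ≤ ‖T‖ ^ j * ‖x‖ := by
  cases j with
  | zero => simp
  | succ j => exact (T ^ (j + 1)).le_of_opNorm_le (norm_pow_le' T j.succ_pos) x

section SeminormedInnerProductSpace

open scoped InnerProductSpace

variable {𝕜 E : Type*} [RCLike 𝕜] [SeminormedAddCommGroup E] [InnerProductSpace 𝕜 E]

/-- **Buzano's inequality**. -/
theorem norm_inner_mul_norm_inner_le (a b e : E) :
    ‖⟪a, e⟫_𝕜‖ * ‖⟪e, b⟫_𝕜‖ ≤ ‖e‖ ^ 2 * (‖a‖ * ‖b‖ + ‖⟪a, b⟫_𝕜‖) / 2 := by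
  -- For `‖e‖ = 1`, `v` is the reflection of `b` in the line spanned by `e`.
  set v : E := (2 * ⟪e, b⟫_𝕜) • e - ((‖e‖ ^ 2 : ℝ) : 𝕜) • b with hv
  have cross : RCLike.re ⟪(2 * ⟪e, b⟫_𝕜) • e, ((‖e‖ ^ 2 : ℝ) : 𝕜) • b⟫_𝕜 =
      2 * ‖e‖ ^ 2 * ‖⟪e, b⟫_𝕜‖ ^ 2 := by
    have h : ⟪(2 * ⟪e, b⟫_𝕜) • e, ((‖e‖ ^ 2 : ℝ) : 𝕜) • b⟫_𝕜 =
        ((2 * ‖e‖ ^ 2 * ‖⟪e, b⟫_𝕜‖ ^ 2 : ℝ) : 𝕜) := by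
      rw [inner_smul_left, inner_smul_right, map_mul (starRingEnd 𝕜), map_ofNat]
      push_cast
      rw [← RCLike.conj_mul]
      ring
    rw [h, RCLike.ofReal_re]
  have norm_v : ‖v‖ = ‖e‖ ^ 2 * ‖b‖ := by
    rw [← sq_eq_sq₀ (norm_nonneg _) (by positivity), hv, norm_sub_sq (𝕜 := 𝕜), cross, norm_smul,
      norm_smul, norm_mul, RCLike.norm_ofNat, RCLike.norm_of_nonneg (by positivity)]
    ring
  have expand : 2 * (⟪a, e⟫_𝕜 * ⟪e, b⟫_𝕜) = ⟪a, v⟫_𝕜 + (‖e‖ ^ 2 : ℝ) * ⟪a, b⟫_𝕜 := by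
    rw [hv, inner_sub_right, inner_smul_right, inner_smul_right]
    ring
  have key : 2 * (‖⟪a, e⟫_𝕜‖ * ‖⟪e, b⟫_𝕜‖) ≤ ‖a‖ * ‖v‖ + ‖e‖ ^ 2 * ‖⟪a, b⟫_𝕜‖ := calc
    2 * (‖⟪a, e⟫_𝕜‖ * ‖⟪e, b⟫_𝕜‖) = ‖⟪a, v⟫_𝕜 + (‖e‖ ^ 2 : ℝ) * ⟪a, b⟫_𝕜‖ := by
      rw [← expand, norm_mul, norm_mul, RCLike.norm_ofNat]
    _ ≤ ‖⟪a, v⟫_𝕜‖ + ‖((‖e‖ ^ 2 : ℝ) : 𝕜) * ⟪a, b⟫_𝕜‖ := norm_add_le _ _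
    _ ≤ ‖a‖ * ‖v‖ + ‖e‖ ^ 2 * ‖⟪a, b⟫_𝕜‖ := by
      rw [norm_mul, RCLike.norm_of_nonneg (by positivity)]
      gcongr
      exact norm_inner_le_norm a v
  rw [norm_v] at key
  linarith

section Moments

variable {P : Module.End 𝕜 E}

theorem re_inner_pow_apply_self_nonneg (hP : P.IsSymmetric)
    (hpos : ∀ x, 0 ≤ RCLike.re ⟪P x, x⟫_𝕜) (j : ℕ) (x : E) :
    0 ≤ RCLike.re ⟪(P ^ j) x, x⟫_𝕜 := by
  obtain ⟨i, rfl | rfl⟩ := j.even_or_odd'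
  · rw [two_mul, pow_add, Module.End.mul_apply, hP.pow i]
    exact inner_self_nonneg
  · rw [two_mul, add_assoc, pow_add, Module.End.mul_apply, hP.pow i, pow_succ',
      Module.End.mul_apply]
    exact hpos _

theorem re_inner_apply_self_mul_re_inner_pow_le (hP : P.IsSymmetric)
    (hpos : ∀ x, 0 ≤ RCLike.re ⟪P x, x⟫_𝕜) {x : E} (hx : ‖x‖ = 1) (j : ℕ) :
    RCLike.re ⟪P x, x⟫_𝕜 * RCLike.re ⟪(P ^ j) x, x⟫_𝕜 ≤ RCLike.re ⟪(P ^ (j + 1)) x, x⟫_𝕜 := by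
  set a := RCLike.re ⟪P x, x⟫_𝕜
  induction j with
  | zero => simp [a, hx]
  | succ j ih =>
    set y := P x - (a : 𝕜) • x with hy
    have second_difference : RCLike.re ⟪(P ^ j) y, y⟫_𝕜 =
        RCLike.re ⟪(P ^ (j + 2)) x, x⟫_𝕜 - 2 * a * RCLike.re ⟪(P ^ (j + 1)) x, x⟫_𝕜
          + a ^ 2 * RCLike.re ⟪(P ^ j) x, x⟫_𝕜 := by
      have apply_pow (i : ℕ) : P ((P ^ i) x) = (P ^ (i + 1)) x := by
        rw [pow_succ', Module.End.mul_apply]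
      have pow_apply : (P ^ j) (P x) = (P ^ (j + 1)) x := by
        rw [pow_succ, Module.End.mul_apply]
      simp only [hy, map_sub, map_smul, inner_sub_left, inner_sub_right, inner_smul_left,
        inner_smul_right, ← hP _ x, pow_apply, apply_pow, RCLike.conj_ofReal, RCLike.re_ofReal_mul]
      ring
    nlinarith [re_inner_pow_apply_self_nonneg hP hpos j y,
      mul_le_mul_of_nonneg_left ih (hpos x)]

/-- **McCarthy's inequality** for natural exponents. -/
theorem re_inner_apply_self_pow_le (hP : P.IsSymmetric)
    (hpos : ∀ x, 0 ≤ RCLike.re ⟪P x, x⟫_𝕜) {x : E} (hx : ‖x‖ = 1) (j : ℕ) :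
    RCLike.re ⟪P x, x⟫_𝕜 ^ j ≤ RCLike.re ⟪(P ^ j) x, x⟫_𝕜 := by
  induction j with
  | zero => simp [hx]
  | succ j ih =>
    rw [pow_succ']
    exact (mul_le_mul_of_nonneg_left ih (hpos x)).trans
      (re_inner_apply_self_mul_re_inner_pow_le hP hpos hx j)

end Moments

/-- `X` is a formal adjoint of the everywhere defined operator `T`. The inner product may be
degenerate, so `X` need not be unique and `T` need not be bounded. -/
def IsFormalAdjoint (T X : Module.End 𝕜 E) : Prop :=
  ∀ x y, ⟪T x, y⟫_𝕜 = ⟪x, X y⟫_𝕜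

namespace IsFormalAdjoint

variable {T X T' X' : Module.End 𝕜 E}

theorem symm (h : IsFormalAdjoint T X) : IsFormalAdjoint X T := fun x y => by
  rw [← inner_conj_symm, ← h, inner_conj_symm]

theorem mul (h : IsFormalAdjoint T X) (h' : IsFormalAdjoint T' X') :
    IsFormalAdjoint (T * T') (X' * X) := fun x y => by
  rw [Module.End.mul_apply, Module.End.mul_apply, h, h']

theorem isSymmetric_mul (h : IsFormalAdjoint T X) : (X * T).IsSymmetric :=
  h.symm.mul h

theorem re_inner_mul_apply_self (h : IsFormalAdjoint T X) (x : E) :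
    RCLike.re ⟪(X * T) x, x⟫_𝕜 = ‖T x‖ ^ 2 := by
  rw [Module.End.mul_apply, h.symm, inner_self_eq_norm_sq]

theorem norm_apply_sq_pow_le (h : IsFormalAdjoint T X) {x : E} (hx : ‖x‖ = 1) (j : ℕ) :
    (‖T x‖ ^ 2) ^ j ≤ RCLike.re ⟪((X * T) ^ j) x, x⟫_𝕜 := by
  rw [← h.re_inner_mul_apply_self]
  refine re_inner_apply_self_pow_le h.isSymmetric_mul (fun y => ?_) hx j
  rw [h.re_inner_mul_apply_self]
  positivity

theorem norm_apply_sq_le_of_norm_pow_le (h : IsFormalAdjoint T X) {x : E} (hx : ‖x‖ = 1)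
    {b C : ℝ} (hb : 0 ≤ b) (hC : ∀ j : ℕ, ‖((X * T) ^ j) x‖ ≤ C * b ^ j) : ‖T x‖ ^ 2 ≤ b :=
  le_of_forall_pow_le_mul_pow hb fun j => calc
    (‖T x‖ ^ 2) ^ j ≤ RCLike.re ⟪((X * T) ^ j) x, x⟫_𝕜 := h.norm_apply_sq_pow_le hx j
    _ ≤ ‖((X * T) ^ j) x‖ * ‖x‖ := re_inner_le_norm _ _
    _ ≤ C * b ^ j := by simpa only [hx, mul_one] using hC j

theorem norm_inner_apply_self_pow_le (h : IsFormalAdjoint T X) {x : E} (hx : ‖x‖ = 1) (n : ℕ) :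
    ‖⟪T x, x⟫_𝕜‖ ^ (2 * n) ≤ ‖⟪((X * T) ^ n) x, x⟫_𝕜‖ := calc
  ‖⟪T x, x⟫_𝕜‖ ^ (2 * n) ≤ (‖T x‖ ^ 2) ^ n := by
    rw [← pow_mul]
    gcongr
    simpa only [hx, mul_one] using norm_inner_le_norm (𝕜 := 𝕜) (T x) x
  _ ≤ RCLike.re ⟪((X * T) ^ n) x, x⟫_𝕜 := h.norm_apply_sq_pow_le hx n
  _ ≤ ‖⟪((X * T) ^ n) x, x⟫_𝕜‖ := RCLike.re_le_norm _

theorem norm_inner_apply_self_pow_four_mul_le (h : IsFormalAdjoint T X) {x : E} (hx : ‖x‖ = 1)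
    (n : ℕ) :
    ‖⟪T x, x⟫_𝕜‖ ^ (4 * n) ≤
      (RCLike.re ⟪((X * T) ^ (2 * n) + (T * X) ^ (2 * n)) x, x⟫_𝕜 +
        2 * ‖⟪((X * T) ^ n * (T * X) ^ n) x, x⟫_𝕜‖) / 4 := by
  set u := ((X * T) ^ n) x with hu
  set v := ((T * X) ^ n) x
  have hP : ((X * T) ^ n).IsSymmetric := h.isSymmetric_mul.pow n
  have hQ : ((T * X) ^ n).IsSymmetric := h.symm.isSymmetric_mul.pow n
  have le_left : ‖⟪T x, x⟫_𝕜‖ ^ (2 * n) ≤ ‖⟪u, x⟫_𝕜‖ := h.norm_inner_apply_self_pow_le hx n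
  have le_right : ‖⟪T x, x⟫_𝕜‖ ^ (2 * n) ≤ ‖⟪x, v⟫_𝕜‖ := by
    rw [h, norm_inner_symm, norm_inner_symm x]
    exact h.symm.norm_inner_apply_self_pow_le hx n
  have buzano : ‖⟪u, x⟫_𝕜‖ * ‖⟪x, v⟫_𝕜‖ ≤ (‖u‖ * ‖v‖ + ‖⟪u, v⟫_𝕜‖) / 2 := by
    simpa only [hx, one_pow, one_mul] using norm_inner_mul_norm_inner_le (𝕜 := 𝕜) u v x
  have norm_inner_uv : ‖⟪u, v⟫_𝕜‖ = ‖⟪((X * T) ^ n * (T * X) ^ n) x, x⟫_𝕜‖ := by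
    rw [hu, hP, norm_inner_symm, Module.End.mul_apply]
  have re_inner_add : RCLike.re ⟪((X * T) ^ (2 * n) + (T * X) ^ (2 * n)) x, x⟫_𝕜 =
      ‖u‖ ^ 2 + ‖v‖ ^ 2 := by
    rw [LinearMap.add_apply, inner_add_left, map_add, two_mul, pow_add, pow_add,
      Module.End.mul_apply, Module.End.mul_apply, hP, hQ, inner_self_eq_norm_sq,
      inner_self_eq_norm_sq]
  calc ‖⟪T x, x⟫_𝕜‖ ^ (4 * n) = ‖⟪T x, x⟫_𝕜‖ ^ (2 * n) * ‖⟪T x, x⟫_𝕜‖ ^ (2 * n) := by ring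
    _ ≤ ‖⟪u, x⟫_𝕜‖ * ‖⟪x, v⟫_𝕜‖ := by gcongr
    _ ≤ (‖u‖ * ‖v‖ + ‖⟪u, v⟫_𝕜‖) / 2 := buzano
    _ ≤ (‖u‖ ^ 2 + ‖v‖ ^ 2 + 2 * ‖⟪u, v⟫_𝕜‖) / 4 := by
      linarith [two_mul_le_add_sq ‖u‖ ‖v‖]
    _ = _ := by rw [re_inner_add, norm_inner_uv]

theorem norm_inner_sum_apply_self_pow_le {ι : Type*} {s : Finset ι} {T X : ι → Module.End 𝕜 E}
    (h : ∀ i ∈ s, IsFormalAdjoint (T i) (X i)) {x : E} (hx : ‖x‖ = 1) {n : ℕ} (hn : 1 ≤ n) :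
    ‖⟪(∑ i ∈ s, T i) x, x⟫_𝕜‖ ^ (4 * n) ≤ (s.card : ℝ) ^ (4 * n - 1) / 4 *
      (RCLike.re ⟪(∑ i ∈ s, ((X i * T i) ^ (2 * n) + (T i * X i) ^ (2 * n))) x, x⟫_𝕜 +
        2 * ∑ i ∈ s, ‖⟪((X i * T i) ^ n * (T i * X i) ^ n) x, x⟫_𝕜‖) := by
  have power_mean := pow_sum_le_card_mul_sum_pow (s := s)
    (fun i _ => norm_nonneg ⟪T i x, x⟫_𝕜) (4 * n - 1)
  rw [Nat.sub_add_cancel (by lia)] at power_mean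
  calc ‖⟪(∑ i ∈ s, T i) x, x⟫_𝕜‖ ^ (4 * n) ≤ (∑ i ∈ s, ‖⟪T i x, x⟫_𝕜‖) ^ (4 * n) := by
        rw [LinearMap.sum_apply, sum_inner]
        gcongr
        exact norm_sum_le _ _
    _ ≤ (s.card : ℝ) ^ (4 * n - 1) * ∑ i ∈ s, ‖⟪T i x, x⟫_𝕜‖ ^ (4 * n) := power_mean
    _ ≤ (s.card : ℝ) ^ (4 * n - 1) * ∑ i ∈ s,
          (RCLike.re ⟪((X i * T i) ^ (2 * n) + (T i * X i) ^ (2 * n)) x, x⟫_𝕜 +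
            2 * ‖⟪((X i * T i) ^ n * (T i * X i) ^ n) x, x⟫_𝕜‖) / 4 := by
        gcongr with i hi
        exact (h i hi).norm_inner_apply_self_pow_four_mul_le hx n
    _ = _ := by
        rw [← Finset.sum_div, Finset.sum_add_distrib, ← Finset.mul_sum, LinearMap.sum_apply,
          sum_inner, map_sum]
        ring

end IsFormalAdjoint

end SeminormedInnerProductSpace

section SemiHilbert

variable {E : Type*} [NormedAddCommGroup E] [InnerProductSpace ℂ E] {A : E →L[ℂ] E}

/-- The semi-Hilbertian space of a positive operator `A`: a copy of `E` carrying the semi-inner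
product `innA A` and the seminorm `vnormA A` in place of those of `E`. -/
@[nolint unusedArguments]
def SemiHilbert (_ : A.IsPositive) : Type _ := E

namespace SemiHilbert

variable (hA : A.IsPositive)

instance : AddCommGroup (SemiHilbert hA) := inferInstanceAs (AddCommGroup E)

instance : Module ℂ (SemiHilbert hA) := inferInstanceAs (Module ℂ E)

/-- The identity, as a linear equivalence from `E` onto its copy `SemiHilbert hA`. -/
def of : E ≃ₗ[ℂ] SemiHilbert hA := LinearEquiv.refl ℂ E

/-- The semi-inner product `innA A` on `SemiHilbert hA`. -/
abbrev core : PreInnerProductSpace.Core ℂ (SemiHilbert hA) where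
  inner x y := innA A ((of hA).symm x) ((of hA).symm y)
  conj_inner_symm x y := (inner_conj_symm _ _).trans (hA.isSymmetric _ _).symm
  re_inner_nonneg _ := hA.re_inner_nonneg_left _
  add_left x y z := by rw [innA, map_add, map_add, inner_add_left, innA, innA]
  smul_left x y r := by rw [innA, map_smul, map_smul, inner_smul_left, innA]

instance : SeminormedAddCommGroup (SemiHilbert hA) :=
  InnerProductSpace.Core.toSeminormedAddCommGroup (c := core hA)

instance : InnerProductSpace ℂ (SemiHilbert hA) :=
  InnerProductSpace.ofCore (core hA)

/-- A bounded operator on `E`, regarded as a linear map of `SemiHilbert hA`; it need not be bounded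
for the seminorm `vnormA A`. -/
def toEnd : (E →L[ℂ] E) →+* Module.End ℂ (SemiHilbert hA) :=
  ContinuousLinearMap.toLinearMapRingHom (R₁ := ℂ) (M₁ := E)

theorem toEnd_apply_of (T : E →L[ℂ] E) (x : E) : toEnd hA T (of hA x) = of hA (T x) := rfl

theorem inner_of_of (x y : E) : inner ℂ (of hA x) (of hA y) = innA A x y := rfl

theorem norm_of (x : E) : ‖of hA x‖ = vnormA A x := rfl

theorem isFormalAdjoint_toEnd_iff {T X : E →L[ℂ] E} :
    IsFormalAdjoint (𝕜 := ℂ) (toEnd hA T) (toEnd hA X) ↔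
      ∀ x y, innA A (T x) y = innA A x (X y) := Iff.rfl

end SemiHilbert

open SemiHilbert

theorem innA_apply_left_of_comp_eq [CompleteSpace E] {T X : E →L[ℂ] E} (hA : A.IsPositive)
    (h : A ∘L X = adjoint T ∘L A) (x y : E) : innA A (T x) y = innA A x (X y) := calc
  innA A (T x) y = inner ℂ (T x) (A y) := hA.isSymmetric _ _
  _ = inner ℂ x (A (X y)) := by
    rw [← comp_apply A X, h, comp_apply, adjoint_inner_right]
  _ = innA A x (X y) := (hA.isSymmetric _ _).symm

theorem vnormA_le (A : E →L[ℂ] E) (x : E) : vnormA A x ≤ √‖A‖ * ‖x‖ := by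
  rw [vnormA, ← Real.sqrt_sq (norm_nonneg x), ← Real.sqrt_mul (norm_nonneg A)]
  refine Real.sqrt_le_sqrt ?_
  calc (innA A x x).re ≤ ‖A x‖ * ‖x‖ := re_inner_le_norm (𝕜 := ℂ) (A x) x
    _ ≤ ‖A‖ * ‖x‖ * ‖x‖ := by gcongr; exact A.le_opNorm x
    _ = ‖A‖ * ‖x‖ ^ 2 := by ring

theorem exists_vnormA_eq_one (hA : A.IsPositive) (hA0 : A ≠ 0) : ∃ x, vnormA A x = 1 := by
  obtain ⟨x, hx⟩ : ∃ x, ‖of hA x‖ ≠ 0 := by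
    by_contra! h
    refine hA0 (ContinuousLinearMap.coe_injective ((inner_map_self_eq_zero _).mp fun x => ?_))
    change inner ℂ (of hA x) (of hA x) = 0
    rw [inner_self_eq_norm_sq_to_K, h x]
    simp
  refine ⟨(‖of hA x‖⁻¹ : ℂ) • x, ?_⟩
  rw [← norm_of hA, map_smul, norm_smul, norm_inv, Complex.norm_real, norm_norm,
    inv_mul_cancel₀ hx]

theorem wA_pow_le (hA : A.IsPositive) (hA0 : A ≠ 0) {T : E →L[ℂ] E} {m : ℕ} (hm : m ≠ 0) {R : ℝ}
    (h : ∀ x, vnormA A x = 1 → ‖innA A (T x) x‖ ^ m ≤ R) : wA A T ^ m ≤ R := by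
  obtain ⟨e, he⟩ := exists_vnormA_eq_one hA hA0
  have hR : 0 ≤ R := (by positivity : 0 ≤ ‖innA A (T e) e‖ ^ m).trans (h e he)
  have wA_nonneg : 0 ≤ wA A T := by
    refine Real.sSup_nonneg ?_
    rintro _ ⟨x, -, rfl⟩
    exact norm_nonneg _
  have wA_le : wA A T ≤ R ^ (m : ℝ)⁻¹ := by
    refine csSup_le ⟨_, e, he, rfl⟩ ?_
    rintro _ ⟨x, hx, rfl⟩
    rw [Real.le_rpow_inv_iff_of_pos (norm_nonneg _) hR (by positivity), Real.rpow_natCast]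
    exact h x hx
  calc wA A T ^ m ≤ (R ^ (m : ℝ)⁻¹) ^ m := by gcongr
    _ = R := Real.rpow_inv_natCast_pow hR hm

section Bounded

variable {hA : A.IsPositive} {T X : E →L[ℂ] E}

theorem vnormA_apply_le_sqrt_norm_mul
    (h : IsFormalAdjoint (𝕜 := ℂ) (toEnd hA T) (toEnd hA X)) {x : E} (hx : vnormA A x = 1) :
    vnormA A (T x) ≤ √‖X * T‖ := by
  refine Real.le_sqrt_of_sq_le (h.norm_apply_sq_le_of_norm_pow_le (x := of hA x) hx
    (C := √‖A‖ * ‖x‖) (norm_nonneg _) fun j => ?_)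
  rw [← map_mul, ← map_pow, toEnd_apply_of, norm_of]
  calc vnormA A (((X * T) ^ j) x) ≤ √‖A‖ * ‖((X * T) ^ j) x‖ := vnormA_le A _
    _ ≤ √‖A‖ * (‖X * T‖ ^ j * ‖x‖) := by gcongr; exact norm_pow_apply_le _ j x
    _ = √‖A‖ * ‖x‖ * ‖X * T‖ ^ j := by ring

theorem vnormA_apply_le_opNormA (h : IsFormalAdjoint (𝕜 := ℂ) (toEnd hA T) (toEnd hA X)) {x : E}
    (hx : vnormA A x = 1) : vnormA A (T x) ≤ opNormA A T := by
  refine le_csSup ⟨√‖X * T‖, ?_⟩ ⟨x, hx, rfl⟩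
  rintro _ ⟨y, hy, rfl⟩
  exact vnormA_apply_le_sqrt_norm_mul h hy

theorem norm_innA_apply_self_le_vnormA (hA : A.IsPositive) (T : E →L[ℂ] E) {x : E}
    (hx : vnormA A x = 1) : ‖innA A (T x) x‖ ≤ vnormA A (T x) := by
  simpa only [norm_of, hx, mul_one, inner_of_of] using
    norm_inner_le_norm (𝕜 := ℂ) (of hA (T x)) (of hA x)

theorem norm_innA_apply_self_le_wA (h : IsFormalAdjoint (𝕜 := ℂ) (toEnd hA T) (toEnd hA X)) {x : E}
    (hx : vnormA A x = 1) : ‖innA A (T x) x‖ ≤ wA A T := by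
  refine le_csSup ⟨√‖X * T‖, ?_⟩ ⟨x, hx, rfl⟩
  rintro _ ⟨y, hy, rfl⟩
  exact (norm_innA_apply_self_le_vnormA hA T hy).trans (vnormA_apply_le_sqrt_norm_mul h hy)

theorem norm_innA_apply_self_le_opNormA
    (h : IsFormalAdjoint (𝕜 := ℂ) (toEnd hA T) (toEnd hA X)) {x : E} (hx : vnormA A x = 1) :
    ‖innA A (T x) x‖ ≤ opNormA A T :=
  (norm_innA_apply_self_le_vnormA hA T hx).trans (vnormA_apply_le_opNormA h hx)

end Bounded

theorem stmt12_general (hA : A.IsPositive) (hA0 : A ≠ 0) {ι : Type*} (s : Finset ι) {n : ℕ}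
    (hn : 1 ≤ n) (S Ssharp : ι → (E →L[ℂ] E))
    (hS : ∀ i ∈ s, ∀ x y, innA A (S i x) y = innA A x (Ssharp i y)) :
    wA A (∑ i ∈ s, S i) ^ (4 * n) ≤
      ((s.card : ℝ) ^ (4 * n - 1) / 4) *
        (opNormA A (∑ i ∈ s, ((Ssharp i * S i) ^ (2 * n) + (S i * Ssharp i) ^ (2 * n))) +
          2 * ∑ i ∈ s, wA A ((Ssharp i * S i) ^ n * (S i * Ssharp i) ^ n)) := by
  have adj (i) (hi : i ∈ s) : IsFormalAdjoint (toEnd hA (S i)) (toEnd hA (Ssharp i)) :=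
    (isFormalAdjoint_toEnd_iff hA).mpr (hS i hi)
  have symm_left (i) (hi : i ∈ s) (m : ℕ) :
      ((toEnd hA (Ssharp i) * toEnd hA (S i)) ^ m).IsSymmetric :=
    (adj i hi).isSymmetric_mul.pow m
  have symm_right (i) (hi : i ∈ s) (m : ℕ) :
      ((toEnd hA (S i) * toEnd hA (Ssharp i)) ^ m).IsSymmetric :=
    (adj i hi).symm.isSymmetric_mul.pow m
  have symm_sum := LinearMap.isSymmetric_sum s fun i hi =>
    (symm_left i hi (2 * n)).add (symm_right i hi (2 * n))
  have adj_mul (i) (hi : i ∈ s) := IsFormalAdjoint.mul (symm_left i hi n) (symm_right i hi n)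
  refine wA_pow_le hA hA0 (by lia) fun x hx => ?_
  have pointwise := IsFormalAdjoint.norm_inner_sum_apply_self_pow_le adj (x := of hA x) hx hn
  simp only [← map_mul, ← map_pow, ← map_add, ← map_sum, toEnd_apply_of, inner_of_of]
    at pointwise symm_sum adj_mul
  refine pointwise.trans ?_
  gcongr with i hi
  · exact (RCLike.re_le_norm _).trans (norm_innA_apply_self_le_opNormA symm_sum hx)
  · exact norm_innA_apply_self_le_wA (adj_mul i hi) hx

end SemiHilbert

theorem stmt12 (A : H →L[ℂ] H) (hA : A.IsPositive) (hA0 : A ≠ 0)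
    (k : ℕ) (hk : 1 ≤ k) (n : ℕ) (hn : 1 ≤ n)
    (S Ssharp : Fin k → (H →L[ℂ] H))
    (hS : ∀ i, IsReducedAAdjoint A (S i) (Ssharp i)) :
    wA A (∑ i, S i) ^ (4 * n) ≤
      ((k : ℝ) ^ (4 * n - 1) / 4) *
        (opNormA A (∑ i, ((Ssharp i * S i) ^ (2 * n) + (S i * Ssharp i) ^ (2 * n))) +
          2 * ∑ i, wA A ((Ssharp i * S i) ^ n * (S i * Ssharp i) ^ n)) := by
  simpa only [Finset.card_univ, Fintype.card_fin] using stmt12_general hA hA0 Finset.univ hn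
    S Ssharp fun i _ => innA_apply_left_of_comp_eq hA (hS i).1
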